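/- (Pfaffian factorization under a vanishing block) Let $N, a, b$ be positive integers with $a < b \le N$, $N$ and $b-a$ even. Let $A(x)$ be an $N \times N$ skew-symmetric matrix whose entries are polynomials in $x$, such that for every $i$ with $a+1 \le i \le b$ and every $j$, the entry $A_{i,j}(x)$ is divisible by $x+s$ (for a fixed real number $s$). Then $\left(\frac{1}{(x+s)^{(b-a)/2}} \operatorname{Pf} A(x)\right)\Big|_{x=-s} = \operatorname{Pf}(\widetilde{A}) \cdot \operatorname{Pf}(S)$, where $\widetilde{A}$ is the matrix obtained from $A$ by deleting rows and columns $a+1, \dots, b$ and then setting $x = -s$, and $S$ is the $(b-a)\times(b-a)$ matrix with entries $\left(\frac{1}{x+s} A_{i,j}(x)\right)\big|_{x=-s}$ for $a+1 \le i,j \le b$. -/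

import Mathlib

/-- The Pfaffian of an `n × n` matrix (intended for skew-symmetric matrices of
even size `n`), defined via the standard sum over all permutations:
`Pf A = (2^(n/2) (n/2)!)⁻¹ ∑_σ sgn(σ) ∏_{i<n/2} A_{σ(2i), σ(2i+1)}`.
For skew-symmetric matrices of even size this agrees with the sum over perfect
matchings with crossing signs. -/
noncomputable def pfaffian {R : Type*} [CommRing R] [Algebra ℚ R] {n : ℕ}
    (A : Matrix (Fin n) (Fin n) R) : R :=
  ((2 ^ (n / 2) * (n / 2).factorial : ℚ)⁻¹) •
    ∑ σ : Equiv.Perm (Fin n),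
      (Equiv.Perm.sign σ : ℤ) •
        ∏ i : Fin (n / 2),
          A (σ ⟨2 * i.1, by have := i.2; omega⟩)
            (σ ⟨2 * i.1 + 1, by have := i.2; omega⟩)

/-- The embedding of indices obtained by deleting the (0-based) index block
`[a, b)` from `Fin N`. -/
def delEmb (N a b : ℕ) (i : Fin (N - (b - a))) : Fin N :=
  if i.1 < a then ⟨i.1, by have := i.2; omega⟩
  else ⟨i.1 + (b - a), by have := i.2; omega⟩

open Equiv Matrix

section PairingSum

variable {R ι ι₁ ι₂ α β α₁ α₂ : Type*} [CommRing R]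

/-- The unnormalized Pfaffian of `M`, where `e` lists the index set as a family of ordered pairs. -/
def pairingSum [Fintype ι] [Fintype α] [DecidableEq α] (e : ι × Fin 2 ≃ α) (M : Matrix α α R) : R :=
  ∑ σ : Perm α, ((Perm.sign σ : ℤ) : R) * ∏ i, M (σ (e (i, 0))) (σ (e (i, 1)))

/-- The permutation of the index set which permutes the pairs listed by `e`. -/
def permPairs (e : ι × Fin 2 ≃ α) (τ : Perm ι) : Perm α :=
  e.permCongr (τ.prodCongr (Equiv.refl (Fin 2)))

/-- The disjoint union of two listings by pairs. -/
def sumPairs (e₁ : ι₁ × Fin 2 ≃ α₁) (e₂ : ι₂ × Fin 2 ≃ α₂) : (ι₁ ⊕ ι₂) × Fin 2 ≃ α₁ ⊕ α₂ :=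
  (Equiv.sumProdDistrib _ _ _).trans (Equiv.sumCongr e₁ e₂)

@[simp]
theorem sumPairs_inl (e₁ : ι₁ × Fin 2 ≃ α₁) (e₂ : ι₂ × Fin 2 ≃ α₂) (i : ι₁) (j : Fin 2) :
    sumPairs e₁ e₂ (Sum.inl i, j) = Sum.inl (e₁ (i, j)) := rfl

@[simp]
theorem sumPairs_inr (e₁ : ι₁ × Fin 2 ≃ α₁) (e₂ : ι₂ × Fin 2 ≃ α₂) (i : ι₂) (j : Fin 2) :
    sumPairs e₁ e₂ (Sum.inr i, j) = Sum.inr (e₂ (i, j)) := rfl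

@[simp]
theorem permPairs_apply (e : ι × Fin 2 ≃ α) (τ : Perm ι) (i : ι) (j : Fin 2) :
    permPairs e τ (e (i, j)) = e (τ i, j) := by
  simp [permPairs, Equiv.permCongr_apply]

theorem permPairs_mul (e : ι × Fin 2 ≃ α) (τ τ' : Perm ι) :
    permPairs e (τ * τ') = permPairs e τ * permPairs e τ' := by
  ext x
  obtain ⟨⟨i, j⟩, rfl⟩ := e.surjective x
  simp

theorem sign_permPairs [Fintype ι] [DecidableEq ι] [Fintype α] [DecidableEq α]
    (e : ι × Fin 2 ≃ α) (τ : Perm ι) : Perm.sign (permPairs e τ) = 1 := by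
  have h : τ.prodCongr (Equiv.refl (Fin 2)) = prodCongrLeft fun _ => τ := by
    ext ⟨i, j⟩ <;> rfl
  rw [permPairs, h, Perm.sign_permCongr, Perm.sign_prodCongrLeft]
  simp

theorem mem_range_sumCongrHom_iff [Finite α₁] [Finite α₂] {σ : Perm (α₁ ⊕ α₂)} :
    σ ∈ (Perm.sumCongrHom α₁ α₂).range ↔ ∀ x, (σ x).isLeft = x.isLeft := by
  constructor
  · rintro ⟨⟨σ₁, σ₂⟩, rfl⟩ (x | x) <;> simp
  · intro h
    refine Perm.mem_sumCongrHom_range_of_perm_mapsTo_inl ?_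
    rintro _ ⟨x, rfl⟩
    obtain ⟨y, hy⟩ := Sum.isLeft_iff.1 (h (Sum.inl x))
    exact ⟨y, hy.symm⟩

theorem isLeft_sumPairs (e₁ : ι₁ × Fin 2 ≃ α₁) (e₂ : ι₂ × Fin 2 ≃ α₂) (i : ι₁ ⊕ ι₂) (j : Fin 2) :
    (sumPairs e₁ e₂ (i, j)).isLeft = i.isLeft := by
  cases i <;> rfl

theorem permPairs_mem_range_iff [Finite ι₁] [Finite ι₂] [Finite α₁] [Finite α₂]
    (e₁ : ι₁ × Fin 2 ≃ α₁) (e₂ : ι₂ × Fin 2 ≃ α₂) (τ : Perm (ι₁ ⊕ ι₂)) :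
    permPairs (sumPairs e₁ e₂) τ ∈ (Perm.sumCongrHom α₁ α₂).range ↔
      τ ∈ (Perm.sumCongrHom ι₁ ι₂).range := by
  rw [mem_range_sumCongrHom_iff, mem_range_sumCongrHom_iff,
    (sumPairs e₁ e₂).surjective.forall, Prod.forall]
  simp [isLeft_sumPairs]

/-- A permutation which never splits a pair between the two summands becomes a pair of permutations
of the summands after permuting the pairs. -/
theorem exists_mul_permPairs_mem_range [Fintype ι₁] [Fintype ι₂] [Fintype α₁] [Fintype α₂]
    (e₁ : ι₁ × Fin 2 ≃ α₁) (e₂ : ι₂ × Fin 2 ≃ α₂) (σ : Perm (α₁ ⊕ α₂))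
    (hσ : ∀ i, (σ (sumPairs e₁ e₂ (i, 0))).isLeft = (σ (sumPairs e₁ e₂ (i, 1))).isLeft) :
    ∃ τ, σ * permPairs (sumPairs e₁ e₂) τ ∈ (Perm.sumCongrHom α₁ α₂).range := by
  set e := sumPairs e₁ e₂ with he
  have hσ' : ∀ i j, (σ (e (i, j))).isLeft = (σ (e (i, 0))).isLeft := by
    intro i j
    fin_cases j
    · rfl
    · exact (hσ i).symm
  let p : ι₁ ⊕ ι₂ → Prop := fun i => i.isLeft = true
  let q : ι₁ ⊕ ι₂ → Prop := fun i => (σ (e (i, 0))).isLeft = true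
  have hp : {x // p x} × Fin 2 ≃ α₁ := (Equiv.prodCongr sumIsLeft (Equiv.refl _)).trans e₁
  have hq : {x // q x} × Fin 2 ≃ α₁ :=
    Equiv.trans (β := {y : α₁ ⊕ α₂ // y.isLeft = true})
      { toFun := fun x => ⟨σ (e (x.1, x.2)), (hσ' _ _).trans x.1.2⟩
        invFun := fun y => (⟨(e.symm (σ.symm y)).1, by
          have h := hσ' (e.symm (σ.symm y)).1 (e.symm (σ.symm y)).2
          simp only [Prod.mk.eta, Equiv.apply_symm_apply] at h
          exact h.symm.trans y.2⟩, (e.symm (σ.symm y)).2)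
        left_inv := fun x => by simp
        right_inv := fun y => by simp } sumIsLeft
  have hcard : Fintype.card {x // p x} = Fintype.card {x // q x} := by
    have h := Fintype.card_congr (hp.trans hq.symm)
    simpa using h
  let f : {x // p x} ≃ {x // q x} := Fintype.equivOfCardEq hcard
  refine ⟨f.extendSubtype, mem_range_sumCongrHom_iff.2 ?_⟩
  rw [e.surjective.forall, Prod.forall]
  intro i j
  rw [Perm.mul_apply, permPairs_apply, hσ', isLeft_sumPairs, Bool.eq_iff_iff]
  exact ⟨fun h => by_contra fun hi => f.extendSubtype_not_mem i hi h, f.extendSubtype_mem i⟩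

variable [Fintype ι] [Fintype ι₁] [Fintype ι₂] [Fintype α] [Fintype β] [Fintype α₁] [Fintype α₂]
  [DecidableEq α] [DecidableEq β] [DecidableEq α₁] [DecidableEq α₂]

theorem pairingSum_trans (e : ι × Fin 2 ≃ α) (g : α ≃ β) (M : Matrix β β R) :
    pairingSum (e.trans g) M = pairingSum e (M.submatrix g g) := by
  refine (Fintype.sum_equiv g.permCongr _ _ fun σ => ?_).symm
  simp [Equiv.permCongr_apply]

theorem pairingSum_trans_perm (e : ι × Fin 2 ≃ α) (τ : Perm α) (M : Matrix α α R) :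
    pairingSum (e.trans τ) M = ((Perm.sign τ : ℤ) : R) * pairingSum e M := by
  rw [pairingSum, pairingSum, Finset.mul_sum]
  refine Fintype.sum_equiv (Equiv.mulRight τ) _ _ fun σ => ?_
  rw [← mul_assoc]
  congr 1
  rw [Equiv.coe_mulRight, ← Int.cast_mul, ← Units.val_mul, Perm.sign_mul, mul_left_comm,
    Int.units_mul_self, mul_one]

theorem pairingSum_prodCongr (e : ι × Fin 2 ≃ α) (h : ι₁ ≃ ι) (M : Matrix α α R) :
    pairingSum ((h.prodCongr (Equiv.refl _)).trans e) M = pairingSum e M := by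
  refine Finset.sum_congr rfl fun σ _ => ?_
  congr 1
  exact Fintype.prod_equiv h _ _ fun i => by simp

theorem sum_range_sumCongrHom (F : Perm (α₁ ⊕ α₂) → R)
    [DecidablePred (· ∈ (Perm.sumCongrHom α₁ α₂).range)] :
    ∑ σ, (if σ ∈ (Perm.sumCongrHom α₁ α₂).range then F σ else 0) =
      ∑ σ₁, ∑ σ₂, F (Perm.sumCongr σ₁ σ₂) := by
  rw [← Fintype.sum_prod_type', ← Finset.sum_filter]
  refine (Finset.sum_bij (fun σ _ => Perm.sumCongr σ.1 σ.2) ?_ ?_ ?_ ?_).symm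
  · intro σ _
    simp
  · intro σ _ σ' _ h
    exact Perm.sumCongrHom_injective h
  · intro σ hσ
    obtain ⟨p, rfl⟩ := (Finset.mem_filter.1 hσ).2
    exact ⟨p, Finset.mem_univ _, rfl⟩
  · intro σ _
    rfl

theorem card_filter_mem_range_sumCongrHom [DecidableEq ι₁] [DecidableEq ι₂]
    [DecidablePred (· ∈ (Perm.sumCongrHom ι₁ ι₂).range)] :
    (Finset.univ.filter (· ∈ (Perm.sumCongrHom ι₁ ι₂).range)).card =
      (Fintype.card ι₁).factorial * (Fintype.card ι₂).factorial := by
  rw [← Fintype.card_subtype, ← Fintype.card_perm, ← Fintype.card_perm, ← Fintype.card_prod]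
  exact (Fintype.card_congr (MonoidHom.ofInjective Perm.sumCongrHom_injective).toEquiv).symm

theorem pairingSum_fromBlocks [DecidableEq ι₁] [DecidableEq ι₂]
    (e₁ : ι₁ × Fin 2 ≃ α₁) (e₂ : ι₂ × Fin 2 ≃ α₂) (M₁ : Matrix α₁ α₁ R) (M₂ : Matrix α₂ α₂ R) :
    ((Fintype.card ι₁).factorial * (Fintype.card ι₂).factorial : R) *
        pairingSum (sumPairs e₁ e₂) (fromBlocks M₁ 0 0 M₂) =
      ((Fintype.card ι₁ + Fintype.card ι₂).factorial : R) *
        (pairingSum e₁ M₁ * pairingSum e₂ M₂) := by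
  classical
  set e := sumPairs e₁ e₂ with he
  set M := fromBlocks M₁ 0 0 M₂ with hM
  let F : Perm (α₁ ⊕ α₂) → R := fun σ =>
    ((Perm.sign σ : ℤ) : R) * ∏ i, M (σ (e (i, 0))) (σ (e (i, 1)))
  let H := (Perm.sumCongrHom α₁ α₂).range
  have hF : ∀ σ τ, F (σ * permPairs e τ) = F σ := by
    intro σ τ
    simp only [F, Perm.sign_mul, sign_permPairs, mul_one, Perm.mul_apply, permPairs_apply]
    congr 1
    exact Fintype.prod_equiv τ _ _ fun i => rfl
  have hrow : ∀ τ, ∑ σ, (if σ * permPairs e τ ∈ H then F σ else 0) =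
      pairingSum e₁ M₁ * pairingSum e₂ M₂ := by
    intro τ
    have h : ∑ σ, (if σ * permPairs e τ ∈ H then F σ else 0) =
        ∑ σ, (if σ ∈ H then F σ else 0) :=
      Fintype.sum_equiv (Equiv.mulRight (permPairs e τ)) _ _ fun σ => by
        simp [hF]
    rw [h, sum_range_sumCongrHom, pairingSum, pairingSum, Finset.sum_mul_sum]
    refine Finset.sum_congr rfl fun σ₁ _ => Finset.sum_congr rfl fun σ₂ _ => ?_
    simp only [F, Fintype.prod_sum_type, he, hM, sumPairs_inl, sumPairs_inr, Perm.sumCongr_apply,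
      Sum.map_inl, Sum.map_inr, fromBlocks_apply₁₁, fromBlocks_apply₂₂, Perm.sign_sumCongr,
      Units.val_mul, Int.cast_mul]
    ring
  have hcol : ∀ σ, ∑ τ, (if σ * permPairs e τ ∈ H then F σ else 0) =
      ((Fintype.card ι₁).factorial * (Fintype.card ι₂).factorial : R) * F σ := by
    intro σ
    by_cases hσ : ∀ i, (σ (e (i, 0))).isLeft = (σ (e (i, 1))).isLeft
    · obtain ⟨τ₀, hτ₀⟩ := exists_mul_permPairs_mem_range e₁ e₂ σ hσ
      have h : ∑ τ, (if σ * permPairs e τ ∈ H then F σ else 0) =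
          ∑ τ, (if τ ∈ (Perm.sumCongrHom ι₁ ι₂).range then F σ else 0) := by
        refine (Fintype.sum_equiv (Equiv.mulLeft τ₀) _ _ fun τ => ?_).symm
        rw [Equiv.coe_mulLeft, permPairs_mul, ← mul_assoc]
        simp only [H, Subgroup.mul_mem_cancel_left _ hτ₀, he, permPairs_mem_range_iff]
      rw [h, ← Finset.sum_filter, Finset.sum_const, card_filter_mem_range_sumCongrHom]
      simp
    · have h0 : F σ = 0 := by
        push Not at hσ
        obtain ⟨i, hi⟩ := hσ
        refine mul_eq_zero_of_right _ (Finset.prod_eq_zero (Finset.mem_univ i) ?_)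
        rcases h1 : σ (e (i, 0)) with x | x <;> rcases h2 : σ (e (i, 1)) with y | y <;>
          simp_all
      simp [h0]
  calc _ = ∑ σ, ∑ τ, (if σ * permPairs e τ ∈ H then F σ else 0) := by
        simp only [hcol, ← Finset.mul_sum]
        rfl
    _ = ∑ τ : Perm (ι₁ ⊕ ι₂), pairingSum e₁ M₁ * pairingSum e₂ M₂ := by
        rw [Finset.sum_comm]
        simp only [hrow]
    _ = _ := by
        rw [Finset.sum_const, Finset.card_univ, Fintype.card_perm, Fintype.card_sum, nsmul_eq_mul]

end PairingSum

section Blocks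

/-- `Fin N` as the disjoint union of the complement of the block `[a, a + k)` and that block. -/
noncomputable def blockEquiv (N a k : ℕ) (h : a + k ≤ N) : Fin (N - k) ⊕ Fin k ≃ Fin N :=
  Equiv.ofBijective
    (Sum.elim (fun i => ⟨if i.1 < a then i.1 else i.1 + k, by have := i.2; split <;> omega⟩)
      (fun j => ⟨a + j.1, by have := j.2; omega⟩)) <| by
    rw [Fintype.bijective_iff_injective_and_card]
    constructor
    · rintro (i | i) (j | j) hij <;>
        simp only [Sum.elim_inl, Sum.elim_inr, Sum.inl.injEq, Sum.inr.injEq,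
          Fin.ext_iff, reduceCtorEq] at hij ⊢ <;> (try split_ifs at hij) <;> omega
    · simp only [Fintype.card_sum, Fintype.card_fin]
      omega

theorem blockEquiv_inl_val {N a k : ℕ} (h : a + k ≤ N) (i : Fin (N - k)) :
    (blockEquiv N a k h (Sum.inl i)).1 = if i.1 < a then i.1 else i.1 + k := rfl

theorem blockEquiv_inr_val {N a k : ℕ} (h : a + k ≤ N) (j : Fin k) :
    (blockEquiv N a k h (Sum.inr j)).1 = a + j.1 := rfl

theorem blockEquiv_inl_eq_delEmb {N a b : ℕ} (h : a + (b - a) ≤ N) (i : Fin (N - (b - a))) :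
    blockEquiv N a (b - a) h (Sum.inl i) = delEmb N a b i := by
  ext
  rw [blockEquiv_inl_val, delEmb]
  split <;> rfl

theorem cycleRange_pow_val {N : ℕ} (i x : Fin N) (hx : x ≤ i) (k : ℕ) :
    ((Fin.cycleRange i ^ k) x).1 = (x.1 + k) % (i.1 + 1) := by
  have hN : NeZero N := ⟨by have := i.2; omega⟩
  have hx' : x.1 ≤ i.1 := hx
  induction k with
  | zero => rw [pow_zero, Perm.one_apply, add_zero, Nat.mod_eq_of_lt (by omega)]
  | succ k ih =>
    rw [pow_succ', Perm.mul_apply]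
    set y := (Fin.cycleRange i ^ k) x
    have hy : y.1 < i.1 + 1 := ih ▸ Nat.mod_lt _ (by omega)
    rw [← add_assoc, Nat.add_mod, ← ih]
    rcases (Nat.lt_succ_iff.1 hy).eq_or_lt with h | h
    · rw [Fin.cycleRange_of_eq (Fin.ext h), h, Nat.add_mod_mod, Nat.mod_self]
      rfl
    · rw [Fin.coe_cycleRange_of_lt h, Nat.add_mod_mod, Nat.mod_eq_of_lt (by omega)]

theorem cycleRange_pow_of_gt {N : ℕ} (i x : Fin N) (hx : i < x) (k : ℕ) :
    (Fin.cycleRange i ^ k) x = x := by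
  induction k with
  | zero => rfl
  | succ k ih => rw [pow_succ', Perm.mul_apply, ih, Fin.cycleRange_of_gt hx]

/-- Moving a block of even size to the front is an even permutation. -/
theorem exists_perm_blockEquiv_zero {N a k : ℕ} (h : a + k ≤ N) (hk : Even k) :
    ∃ τ : Perm (Fin N), Perm.sign τ = 1 ∧
      (blockEquiv N a k h).trans τ = blockEquiv N 0 k (by omega) := by
  rcases Nat.eq_zero_or_pos k with rfl | hk0
  · refine ⟨1, map_one _, ?_⟩
    ext (x | x)
    · rw [Equiv.trans_apply, Perm.one_apply, blockEquiv_inl_val, blockEquiv_inl_val]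
      split_ifs <;> rfl
    · exact x.elim0
  · let c : Fin N := ⟨a + k - 1, by omega⟩
    have hc : c.1 + 1 = a + k := by simp only [c]; omega
    refine ⟨Fin.cycleRange c ^ k, ?_, ?_⟩
    · obtain ⟨l, rfl⟩ := hk
      rw [map_pow, ← two_mul, pow_mul, Int.units_sq, one_pow]
    · ext (x | x)
      · rw [Equiv.trans_apply, blockEquiv_inl_val, if_neg (Nat.not_lt_zero _)]
        have hv := blockEquiv_inl_val h x
        by_cases hx : x.1 < a
        · rw [if_pos hx] at hv
          rw [cycleRange_pow_val _ _ (Fin.le_def.2 (by omega)), hv, hc,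
            Nat.mod_eq_of_lt (by omega)]
        · rw [if_neg hx] at hv
          rw [cycleRange_pow_of_gt _ _ (Fin.lt_def.2 (by omega)), hv]
      · have hv := blockEquiv_inr_val h x
        have hxk := x.2
        rw [Equiv.trans_apply, blockEquiv_inr_val,
          cycleRange_pow_val _ _ (Fin.le_def.2 (by omega)), hv, hc,
          show a + x.1 + k = x.1 + (a + k) by omega, Nat.add_mod_right,
          Nat.mod_eq_of_lt (by omega), zero_add]

/-- The listing `(0, 1), (2, 3), …` of `Fin N` by consecutive pairs. -/
def consecutivePairs {N : ℕ} (hN : Even N) : Fin (N / 2) × Fin 2 ≃ Fin N :=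
  finProdFinEquiv.trans (finCongr (Nat.div_mul_cancel hN.two_dvd))

theorem consecutivePairs_val {N : ℕ} (hN : Even N) (i : Fin (N / 2)) (j : Fin 2) :
    (consecutivePairs hN (i, j)).1 = j.1 + 2 * i.1 := by
  simp [consecutivePairs]

theorem pfaffian_eq_smul_pairingSum {R : Type*} [CommRing R] [Algebra ℚ R] {N : ℕ} (hN : Even N)
    (A : Matrix (Fin N) (Fin N) R) :
    pfaffian A = ((2 ^ (N / 2) * (N / 2).factorial : ℚ)⁻¹) •
      pairingSum (consecutivePairs hN) A := by
  rw [pfaffian, pairingSum]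
  congr 1
  refine Finset.sum_congr rfl fun σ _ => ?_
  rw [zsmul_eq_mul]
  congr 1
  refine Finset.prod_congr rfl fun i _ => ?_
  congr 2 <;> ext <;> simp [consecutivePairs_val, add_comm]

theorem pairingSum_consecutivePairs_eq {R : Type*} [CommRing R] {N a k : ℕ} (h : a + k ≤ N)
    (hN : Even N) (hk : Even k) (hNk : Even (N - k)) (M : Matrix (Fin N) (Fin N) R) :
    pairingSum (consecutivePairs hN) M =
      pairingSum (sumPairs (consecutivePairs hNk) (consecutivePairs hk))
        (M.submatrix (blockEquiv N a k h) (blockEquiv N a k h)) := by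
  obtain ⟨τ, hτ, hg⟩ := exists_perm_blockEquiv_zero h hk
  have hdiv : (N - k) / 2 = N / 2 - k / 2 := by
    obtain ⟨l, rfl⟩ := hk
    omega
  let f : Fin ((N - k) / 2) ⊕ Fin (k / 2) ≃ Fin (N / 2) :=
    (Equiv.sumCongr (finCongr hdiv) (Equiv.refl _)).trans (blockEquiv (N / 2) 0 (k / 2) (by omega))
  have hf : (f.prodCongr (Equiv.refl (Fin 2))).trans (consecutivePairs hN) =
      ((sumPairs (consecutivePairs hNk) (consecutivePairs hk)).trans (blockEquiv N a k h)).trans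
        τ := by
    rw [Equiv.trans_assoc, hg]
    ext ⟨i | i, j⟩
    · obtain ⟨l, rfl⟩ := hk
      simp [f, blockEquiv_inl_val, consecutivePairs_val]
      omega
    · simp [f, blockEquiv_inr_val, consecutivePairs_val]
  rw [← pairingSum_prodCongr _ f, hf, pairingSum_trans_perm, hτ, pairingSum_trans]
  simp

theorem pfaffian_of_submatrix_eq_fromBlocks {N a k : ℕ} (h : a + k ≤ N)
    (hN : Even N) (hk : Even k) {M : Matrix (Fin N) (Fin N) ℝ}
    {M₁ : Matrix (Fin (N - k)) (Fin (N - k)) ℝ} {M₂ : Matrix (Fin k) (Fin k) ℝ}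
    (hM : M.submatrix (blockEquiv N a k h) (blockEquiv N a k h) = fromBlocks M₁ 0 0 M₂) :
    pfaffian M = pfaffian M₁ * pfaffian M₂ := by
  have hNk : Even (N - k) := hN.tsub hk
  have hdiv : N / 2 = (N - k) / 2 + k / 2 := by
    obtain ⟨l, rfl⟩ := hk
    omega
  have key := pairingSum_fromBlocks (consecutivePairs hNk) (consecutivePairs hk) M₁ M₂
  simp only [Fintype.card_fin, ← hdiv] at key
  rw [pfaffian_eq_smul_pairingSum hN, pfaffian_eq_smul_pairingSum hNk,
    pfaffian_eq_smul_pairingSum hk, pairingSum_consecutivePairs_eq h hN hk hNk, hM]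
  simp only [Algebra.smul_def, eq_ratCast]
  push_cast
  have h0 := Nat.factorial_ne_zero (N / 2)
  have h1 := Nat.factorial_ne_zero ((N - k) / 2)
  have h2 := Nat.factorial_ne_zero (k / 2)
  have hpow : (2 : ℝ) ^ (N / 2) = 2 ^ ((N - k) / 2) * 2 ^ (k / 2) := by rw [hdiv, pow_add]
  rw [hpow]
  field_simp
  linear_combination key

end Blocks

section Divisibility

open Polynomial

/-- The excess of the exponents over `k` is half of `∑ i, d i`, so evaluating the quotient at a zero
of `t` kills the product unless `d` vanishes identically. -/
theorem exists_prod_eq_pow_mul {R ι : Type*} [CommRing R] [Fintype ι] {t : R[X]} {x : R}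
    (ht : t.eval x = 0) {k : ℕ} {w d : ι → ℕ} (hw : 2 * ∑ i, w i = 2 * k + ∑ i, d i)
    (g : ι → R[X]) :
    ∃ q : R[X], ∏ i, t ^ w i * g i = t ^ k * q ∧
      q.eval x = ∏ i, if d i = 0 then (g i).eval x else 0 := by
  refine ⟨t ^ (∑ i, w i - k) * ∏ i, g i, ?_, ?_⟩
  · rw [Finset.prod_mul_distrib, Finset.prod_pow_eq_pow_sum, ← mul_assoc, ← pow_add,
      Nat.add_sub_cancel' (by omega)]
  · by_cases hd : ∀ i, d i = 0
    · have h0 : ∑ i, d i = 0 := Finset.sum_eq_zero fun i _ => hd i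
      simp [hd, show ∑ i, w i - k = 0 by omega, eval_prod]
    · obtain ⟨i, hi⟩ := not_forall.1 hd
      have hpos : 0 < ∑ i, d i :=
        (Nat.pos_of_ne_zero hi).trans_le
          (Finset.single_le_sum (fun _ _ => Nat.zero_le _) (Finset.mem_univ i))
      rw [Finset.prod_eq_zero (f := fun i => if d i = 0 then (g i).eval x else 0)
        (Finset.mem_univ i) (if_neg hi), eval_mul, eval_pow, ht,
        zero_pow (by omega), zero_mul]

end Divisibility

theorem stmt_14 (N a b : ℕ) (ha : 0 < a) (hab : a < b) (hbN : b ≤ N)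
    (hN : Even N) (hba : Even (b - a)) (s : ℝ)
    (A : Matrix (Fin N) (Fin N) (Polynomial ℝ))
    (hskew : ∀ i j, A j i = -A i j)
    (hdvd : ∀ i j : Fin N, a ≤ i.1 → i.1 < b →
      (Polynomial.X + Polynomial.C s) ∣ A i j) :
    ∃ q : Polynomial ℝ,
      pfaffian A = (Polynomial.X + Polynomial.C s) ^ ((b - a) / 2) * q ∧
      q.eval (-s) =
        pfaffian (Matrix.of fun i j : Fin (N - (b - a)) =>
            Polynomial.eval (-s) (A (delEmb N a b i) (delEmb N a b j))) *
          pfaffian (Matrix.of fun i j : Fin (b - a) =>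
            Polynomial.eval (-s)
              (A ⟨a + i.1, by have := i.2; omega⟩ ⟨a + j.1, by have := j.2; omega⟩ /
                (Polynomial.X + Polynomial.C s))) := by
  have hNk : a + (b - a) ≤ N := by omega
  set t : Polynomial ℝ := Polynomial.X + Polynomial.C s with ht
  have ht0 : t ≠ 0 := Polynomial.X_add_C_ne_zero s
  have hteval : t.eval (-s) = 0 := by simp [ht]
  let β : Fin N → ℕ := fun i => if a ≤ i.1 ∧ i.1 < b then 1 else 0
  let g : Fin N → Fin N → Polynomial ℝ := fun i j => if β i + β j = 0 then A i j else A i j / t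
  let w : Fin N → Fin N → ℕ := fun i j => if β i + β j = 0 then 0 else 1
  let d : Fin N → Fin N → ℕ := fun i j => if β i = β j then 0 else 1
  have hβ : ∀ i, β i = 0 ∨ β i = 1 := fun i => by simp only [β]; split <;> simp
  have hβinl : ∀ i, β (blockEquiv N a (b - a) hNk (Sum.inl i)) = 0 := fun i => by
    simp only [β, blockEquiv_inl_val]
    split <;> simp <;> omega
  have hβinr : ∀ j, β (blockEquiv N a (b - a) hNk (Sum.inr j)) = 1 := fun j => by
    have := j.2
    simp only [β, blockEquiv_inr_val]
    exact if_pos (by omega)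
  have hA : ∀ i j, A i j = t ^ w i j * g i j := by
    intro i j
    by_cases h : β i + β j = 0
    · simp only [w, g, if_pos h, pow_zero, one_mul]
    · have hdiv : t ∣ A i j := by
        by_cases hi : a ≤ i.1 ∧ i.1 < b
        · exact hdvd i j hi.1 hi.2
        · have hj : a ≤ j.1 ∧ j.1 < b := by
            by_contra hj
            exact h (by simp [β, hi, hj])
          rw [hskew j i]
          exact (hdvd j i hj.1 hj.2).neg_right
      simp only [w, g, if_neg h, pow_one, EuclideanDomain.mul_div_cancel' ht0 hdiv]
  have hwd : ∀ i j, 2 * w i j = (β i + β j) + d i j := by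
    intro i j
    rcases hβ i with hi | hi <;> rcases hβ j with hj | hj <;> simp [w, d, hi, hj]
  have hβsum : ∑ i, β i = b - a := by
    rw [← (blockEquiv N a (b - a) hNk).sum_comp, Fintype.sum_sum_type]
    simp [hβinl, hβinr]
  set e := consecutivePairs hN
  let M : Matrix (Fin N) (Fin N) ℝ :=
    Matrix.of fun i j => if d i j = 0 then (g i j).eval (-s) else 0
  have hq : ∀ σ : Perm (Fin N), ∃ q : Polynomial ℝ,
      ∏ i, A (σ (e (i, 0))) (σ (e (i, 1))) = t ^ ((b - a) / 2) * q ∧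
        q.eval (-s) = ∏ i, M (σ (e (i, 0))) (σ (e (i, 1))) := by
    intro σ
    have hsum : ∑ i, (β (σ (e (i, 0))) + β (σ (e (i, 1)))) = b - a := by
      rw [← hβsum, ← (e.trans σ).sum_comp, Fintype.sum_prod_type]
      simp [Fin.sum_univ_two]
    simp only [hA]
    refine exists_prod_eq_pow_mul hteval (d := fun i => d (σ (e (i, 0))) (σ (e (i, 1)))) ?_ _
    rw [Finset.mul_sum, Nat.mul_div_cancel' hba.two_dvd, ← hsum, ← Finset.sum_add_distrib]
    exact Finset.sum_congr rfl fun i _ => hwd _ _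
  choose q hq hqeval using hq
  refine ⟨((2 ^ (N / 2) * (N / 2).factorial : ℚ)⁻¹) •
    ∑ σ : Perm (Fin N), ((Perm.sign σ : ℤ) : Polynomial ℝ) * q σ, ?_, ?_⟩
  · rw [pfaffian_eq_smul_pairingSum hN, pairingSum, mul_smul_comm, Finset.mul_sum]
    congr 1
    refine Finset.sum_congr rfl fun σ _ => ?_
    rw [hq, mul_left_comm]
  · rw [← pfaffian_of_submatrix_eq_fromBlocks (M := M) hNk hN hba, pfaffian_eq_smul_pairingSum hN,
      pairingSum, Polynomial.eval_smul, Polynomial.eval_finsetSum]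
    · simp [hqeval, e]
    · ext (i | i) (j | j)
      · simp only [submatrix_apply, fromBlocks_apply₁₁, of_apply, M, d, g, hβinl]
        simp [blockEquiv_inl_eq_delEmb]
      · simp [M, d, hβinl, hβinr]
      · simp [M, d, hβinl, hβinr]
      · simp only [submatrix_apply, fromBlocks_apply₂₂, of_apply, M, d, g, hβinr]
        rfl
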